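/- There exist finite simple graphs G and H on 16 vertices such that G ≅_{S+} H but G is not DNN-isomorphic to H; that is, there exists an S+-isomorphism matrix for G to H but no DNN-isomorphism matrix for G to H. (One may take G to be the 4-dimensional hypercube graph and H the Hoffman graph.) -/

import Mathlib

open Matrix BigOperators

/-- `rel(g,g') = rel(h,h')`. -/
def relEq {α β : Type*} (G : SimpleGraph α) (H : SimpleGraph β)
    (g g' : α) (h h' : β) : Prop :=
  (g = g' ↔ h = h') ∧ (G.Adj g g' ↔ H.Adj h h')

/-- `M` satisfies the linear constraints of an isomorphism matrix for `G` to `H`. -/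
def IsIsoMatrix {α β : Type*} [Fintype α] [Fintype β]
    (G : SimpleGraph α) (H : SimpleGraph β)
    (M : Matrix (α × β) (α × β) ℝ) : Prop :=
  (∀ g g' : α, ∑ h : β, ∑ h' : β, M (g, h) (g', h') = 1) ∧
  (∀ h h' : β, ∑ g : α, ∑ g' : α, M (g, h) (g', h') = 1) ∧
  (∀ g g' h h', ¬ relEq G H g g' h h' → M (g, h) (g', h') = 0)

open Polynomial
open scoped Kronecker

/-! Let `A` and `B` be the adjacency matrices of `G` and `H`. An isomorphism matrix `M` is the Choi
matrix of a linear map `Φ`.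

For the `S+`-isomorphism, `Φ` sends each spectral idempotent `E` of `A` to that of `B` for the same
eigenvalue, so that `M = ∑ (tr E)⁻¹ • E ⊗ F` is positive semidefinite. Then `Φ (p(A)) = p(B)` for
every polynomial `p`; as the all-ones matrix is such a polynomial (Hoffman), the row sums are right.
The entries of `p(A)` on the diagonal and on the edges are constant (1-walk-regularity), so the
entry of `M` at `(g, h), (g', h')` is, when `g = g'`, a multiple of the `(h, h')` entry of
`Φ 1 = 1`, and when `g ∼ g'`, of that of `Φ A = B`. This gives the zero pattern.

Conversely, for every `S+`-isomorphism matrix, `Φ A = B` and its counterpart `Φ* B = A` place `A`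
in the multiplicative domain of `Φ`, whence `Φ (A ^ n) = B ^ n`. If `M` is also nonnegative, the
equality case of `∑ M (x - y) ^ 2 ≥ 0`, with `x` and `y` the entries of `A ^ n` and `B ^ n`, shows
that on the support of `M` the numbers of walks of length `n` agree. But the number of walks of
length two between any two vertices of the tesseract is even, while in the Hoffman graph there are
pairs of vertices for which it is odd. -/

section ChoiMap

variable {α β R : Type*} [Fintype α] [CommSemiring R]

/-- The linear map `X ↦ Tr₁ (M (X ⊗ 1))` from `α × α` to `β × β` matrices whose Choi matrix is, up
to a transposition, `M`. -/
def choiMap (M : Matrix (α × β) (α × β) R) (X : Matrix α α R) : Matrix β β R :=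
  of fun h h' => ∑ g, ∑ g', M (g, h) (g', h') * X g' g

theorem choiMap_const_one_apply (M : Matrix (α × β) (α × β) R) (h h' : β) :
    choiMap M (of fun _ _ => 1) h h' = ∑ g, ∑ g', M (g, h) (g', h') := by
  simp only [choiMap, of_apply, mul_one]

variable [Fintype β]

theorem trace_choiMap_mul (M : Matrix (α × β) (α × β) R) (X : Matrix α α R) (Y : Matrix β β R) :
    (choiMap M X * Y).trace = (M * (X ⊗ₖ Y)).trace := by
  simp only [choiMap, trace, diag_apply, mul_apply, of_apply, kronecker_apply,
    Fintype.sum_prod_type, Finset.sum_mul, mul_assoc]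
  rw [Finset.sum_congr rfl fun h _ => Finset.sum_comm, Finset.sum_comm]
  refine Finset.sum_congr rfl fun g _ => Finset.sum_congr rfl fun h _ => ?_
  exact Finset.sum_comm

theorem trace_mul_choiMap_swap (M : Matrix (α × β) (α × β) R) (X : Matrix α α R)
    (Y : Matrix β β R) :
    (X * choiMap (M.submatrix Prod.swap Prod.swap) Y).trace = (M * (X ⊗ₖ Y)).trace := by
  rw [trace_mul_comm, trace_choiMap_mul]
  simp only [trace, diag_apply, mul_apply, ← (Equiv.prodComm α β).sum_comp]
  simp [mul_comm (Y _ _)]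

end ChoiMap

section SpectralIdempotent

variable {n 𝕜 : Type*} [RCLike 𝕜] [Fintype n] [DecidableEq n] {A : Matrix n n 𝕜}

theorem isHermitian_aeval (hA : A.IsHermitian) (p : ℝ[X]) : (aeval A p).IsHermitian :=
  cfc_polynomial p A hA.isSelfAdjoint ▸ cfc_predicate (p := IsSelfAdjoint) p.eval A

theorem aeval_congr_of_eqOn_spectrum (hA : A.IsHermitian) {p q : ℝ[X]}
    (hpq : (spectrum ℝ A).EqOn p.eval q.eval) : aeval A p = aeval A q := by
  rw [← cfc_polynomial p A hA.isSelfAdjoint, ← cfc_polynomial q A hA.isSelfAdjoint, cfc_congr hpq]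

/-- For Hermitian `A` with spectrum contained in `s`, the orthogonal projection onto the
`θ`-eigenspace of `A`; it vanishes when `θ ∈ s` is not an eigenvalue. -/
noncomputable def spectralIdempotent (s : Finset ℝ) (A : Matrix n n 𝕜) (θ : ℝ) : Matrix n n 𝕜 :=
  aeval A (Lagrange.basis s id θ)

variable {s : Finset ℝ}

theorem sum_eval_smul_spectralIdempotent (hA : A.IsHermitian) (hs : spectrum ℝ A ⊆ s) (p : ℝ[X]) :
    ∑ θ ∈ s, p.eval θ • spectralIdempotent s A θ = aeval A p := by
  calc ∑ θ ∈ s, p.eval θ • spectralIdempotent s A θ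
      = aeval A (Lagrange.interpolate s id p.eval) := by
        simp only [spectralIdempotent, Lagrange.interpolate_apply, map_sum, ← smul_eq_C_mul,
          map_smul]
    _ = aeval A p := aeval_congr_of_eqOn_spectrum hA fun _ hx =>
        Lagrange.eval_interpolate_at_node p.eval Function.injective_id.injOn (hs hx)

theorem aeval_mul_spectralIdempotent (hA : A.IsHermitian) (hs : spectrum ℝ A ⊆ s) (p : ℝ[X])
    (θ : ℝ) : aeval A p * spectralIdempotent s A θ = p.eval θ • spectralIdempotent s A θ := by
  rw [spectralIdempotent, ← map_mul, ← map_smul]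
  refine aeval_congr_of_eqOn_spectrum hA fun x hx => ?_
  obtain rfl | hne := eq_or_ne θ x
  · simp
  · have : (Lagrange.basis s id θ).eval x = 0 := Lagrange.eval_basis_of_ne (v := id) hne (hs hx)
    simp [this]

open scoped ComplexOrder in
theorem posSemidef_spectralIdempotent (hA : A.IsHermitian) (hs : spectrum ℝ A ⊆ s)
    {θ : ℝ} (hθ : θ ∈ s) : (spectralIdempotent s A θ).PosSemidef := by
  have hself : (spectralIdempotent s A θ)ᴴ = spectralIdempotent s A θ := isHermitian_aeval hA _
  have heval : (Lagrange.basis s id θ).eval θ = 1 :=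
    Lagrange.eval_basis_self (v := id) Function.injective_id.injOn hθ
  have hidem : spectralIdempotent s A θ * spectralIdempotent s A θ = spectralIdempotent s A θ := by
    have := aeval_mul_spectralIdempotent hA hs (Lagrange.basis s id θ) θ
    rwa [heval, one_smul] at this
  rw [← hidem]
  nth_rw 1 [← hself]
  exact posSemidef_conjTranspose_mul_self _

end SpectralIdempotent

section SpectralChoi

variable {α β : Type*} [Fintype α] [DecidableEq α] [Fintype β] [DecidableEq β]

/-- `A` and `B` are Hermitian, their spectra lie in `s`, and every eigenvalue has the same
multiplicity in both. The multiplicities are encoded by the traces of polynomials. -/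
structure IsCospectralOn (s : Finset ℝ) (A : Matrix α α ℝ) (B : Matrix β β ℝ) : Prop where
  isHermitian_left : A.IsHermitian
  isHermitian_right : B.IsHermitian
  spectrum_left_subset : spectrum ℝ A ⊆ s
  spectrum_right_subset : spectrum ℝ B ⊆ s
  trace_aeval_eq (p : ℝ[X]) : (aeval A p).trace = (aeval B p).trace

/-- For cospectral `A` and `B`, the Choi matrix of the map that sends each spectral idempotent of
`A` to that of `B` for the same eigenvalue and annihilates their orthogonal complement. The
convention `0⁻¹ = 0` takes care of the elements of `s` which are not eigenvalues. -/
noncomputable def spectralChoi (s : Finset ℝ) (A : Matrix α α ℝ) (B : Matrix β β ℝ) :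
    Matrix (α × β) (α × β) ℝ :=
  ∑ θ ∈ s, (spectralIdempotent s A θ).trace⁻¹ •
    (spectralIdempotent s A θ ⊗ₖ spectralIdempotent s B θ)

namespace IsCospectralOn

variable {s : Finset ℝ} {A : Matrix α α ℝ} {B : Matrix β β ℝ}

theorem symm (h : IsCospectralOn s A B) : IsCospectralOn s B A :=
  ⟨h.isHermitian_right, h.isHermitian_left, h.spectrum_right_subset, h.spectrum_left_subset,
    fun p => (h.trace_aeval_eq p).symm⟩

theorem posSemidef_spectralChoi (h : IsCospectralOn s A B) : (spectralChoi s A B).PosSemidef :=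
  posSemidef_sum s fun _ hθ =>
    have hE := posSemidef_spectralIdempotent h.isHermitian_left h.spectrum_left_subset hθ
    have hF := posSemidef_spectralIdempotent h.isHermitian_right h.spectrum_right_subset hθ
    (hE.kronecker hF).smul (inv_nonneg.2 hE.trace_nonneg)

theorem submatrix_swap_spectralChoi (h : IsCospectralOn s A B) :
    (spectralChoi s A B).submatrix Prod.swap Prod.swap = spectralChoi s B A := by
  ext ⟨j, i⟩ ⟨j', i'⟩
  simp only [spectralChoi, submatrix_apply, Prod.swap, Matrix.sum_apply, Matrix.smul_apply,
    kronecker_apply, spectralIdempotent, h.trace_aeval_eq, mul_comm (aeval A _ _ _)]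

theorem trace_inv_mul_trace_smul (h : IsCospectralOn s A B) (p : ℝ[X]) {θ : ℝ} (hθ : θ ∈ s) :
    ((spectralIdempotent s A θ).trace⁻¹ * (aeval A p * spectralIdempotent s A θ).trace) •
      spectralIdempotent s B θ = p.eval θ • spectralIdempotent s B θ := by
  rw [aeval_mul_spectralIdempotent h.isHermitian_left h.spectrum_left_subset, trace_smul,
    smul_eq_mul]
  obtain hm | hm := eq_or_ne (spectralIdempotent s A θ).trace 0
  · have hF : spectralIdempotent s B θ = 0 :=
      (posSemidef_spectralIdempotent h.isHermitian_right h.spectrum_right_subset hθ)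
        |>.trace_eq_zero_iff.1 ((h.trace_aeval_eq _).symm.trans hm)
    rw [hF, smul_zero, smul_zero]
  · rw [mul_left_comm, inv_mul_cancel₀ hm, mul_one]

theorem choiMap_spectralChoi (h : IsCospectralOn s A B) (p : ℝ[X]) :
    choiMap (spectralChoi s A B) (aeval A p) = aeval B p := by
  refine ext_iff_trace_mul_right.2 fun W => ?_
  rw [trace_choiMap_mul, spectralChoi,
    ← sum_eval_smul_spectralIdempotent h.isHermitian_right h.spectrum_right_subset p]
  simp only [Finset.sum_mul, trace_sum]
  refine Finset.sum_congr rfl fun θ hθ => ?_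
  rw [← h.trace_inv_mul_trace_smul p hθ, trace_mul_comm (aeval A p)]
  simp only [smul_mul, trace_smul, ← mul_kronecker_mul, trace_kronecker, smul_eq_mul, mul_assoc]

theorem sum_mul_spectralChoi_apply (h : IsCospectralOn s A B) {r : ℝ[X]} {g g' : α}
    (hr : ∀ i j, aeval A r i j ≠ 0 → ∀ p : ℝ[X], aeval A p i j = aeval A p g g') (k k' : β) :
    (∑ i, ∑ j, aeval A r i j) * spectralChoi s A B (g, k) (g', k') = aeval B r k k' := by
  rw [← h.choiMap_spectralChoi, choiMap, of_apply]
  simp only [Finset.sum_mul]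
  refine Finset.sum_congr rfl fun i _ => Finset.sum_congr rfl fun j _ => ?_
  have hsymm : aeval A r j i = aeval A r i j := (isHermitian_aeval h.isHermitian_left r).apply i j
  obtain h0 | h0 := eq_or_ne (aeval A r i j) 0
  · rw [hsymm, h0, zero_mul, mul_zero]
  · have hblock : spectralChoi s A B (i, k) (j, k') = spectralChoi s A B (g, k) (g', k') := by
      simp only [spectralChoi, Matrix.sum_apply, Matrix.smul_apply, kronecker_apply,
        spectralIdempotent, hr i j h0]
    rw [hsymm, hblock, mul_comm]

end IsCospectralOn

end SpectralChoi

section OneWalkRegular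

variable {α β : Type*} [Fintype α] [DecidableEq α] [Fintype β] [DecidableEq β]
  {G : SimpleGraph α} {H : SimpleGraph β} [DecidableRel G.Adj] [DecidableRel H.Adj]

/-- A graph is 1-walk-regular when, for each length, the number of walks from `i` to `j` is the
same for all `i = j` and the same for all adjacent `i` and `j`. This is expressed through all
polynomials in the adjacency matrix. -/
structure IsOneWalkRegular (G : SimpleGraph α) [DecidableRel G.Adj] : Prop where
  aeval_apply_self (p : ℝ[X]) (i j : α) : aeval (G.adjMatrix ℝ) p i i = aeval (G.adjMatrix ℝ) p j j
  aeval_apply_adj (p : ℝ[X]) {i j i' j' : α} (h : G.Adj i j) (h' : G.Adj i' j') :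
    aeval (G.adjMatrix ℝ) p i j = aeval (G.adjMatrix ℝ) p i' j'

theorem IsOneWalkRegular.spectralChoi_apply_eq_zero (hG : IsOneWalkRegular G) {s : Finset ℝ}
    (hs : IsCospectralOn s (G.adjMatrix ℝ) (H.adjMatrix ℝ)) {g g' : α} {h h' : β}
    (hne : g = g' ∧ h ≠ h' ∨ G.Adj g g' ∧ ¬ H.Adj h h') :
    spectralChoi s (G.adjMatrix ℝ) (H.adjMatrix ℝ) (g, h) (g', h') = 0 := by
  obtain ⟨rfl, hh⟩ | ⟨hg, hh⟩ := hne
  · have key := hs.sum_mul_spectralChoi_apply (r := 1) (g := g) (g' := g) (fun i j hij p => by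
      obtain rfl : i = j := by_contra fun hij' => hij (by simp [hij'])
      exact hG.aeval_apply_self p i g) h h'
    have : Nonempty α := ⟨g⟩
    simpa [one_apply, hh] using key
  · have key := hs.sum_mul_spectralChoi_apply (r := X) (g := g) (g' := g') (fun i j hij p => by
      rw [aeval_X, SimpleGraph.adjMatrix_apply] at hij
      exact hG.aeval_apply_adj p (by_contra fun hij' => hij (if_neg hij')) hg) h h'
    have hnonneg (i j : α) : 0 ≤ G.adjMatrix ℝ i j := by
      rw [SimpleGraph.adjMatrix_apply]; positivity
    have hpos : 0 < ∑ i, ∑ j, G.adjMatrix ℝ i j :=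
      Finset.sum_pos' (fun i _ => Finset.sum_nonneg fun j _ => hnonneg i j) ⟨g, Finset.mem_univ g,
        Finset.sum_pos' (fun j _ => hnonneg g j) ⟨g', Finset.mem_univ g', by simp [hg]⟩⟩
    rw [aeval_X, aeval_X, SimpleGraph.adjMatrix_apply H, if_neg hh] at key
    exact (mul_eq_zero.1 key).resolve_left hpos.ne'

theorem IsOneWalkRegular.exists_isIsoMatrix_posSemidef (hG : IsOneWalkRegular G)
    (hH : IsOneWalkRegular H)
    (htr : ∀ p : ℝ[X], (aeval (G.adjMatrix ℝ) p).trace = (aeval (H.adjMatrix ℝ) p).trace)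
    {q : ℝ[X]} (hqG : aeval (G.adjMatrix ℝ) q = of fun _ _ => 1)
    (hqH : aeval (H.adjMatrix ℝ) q = of fun _ _ => 1) :
    ∃ M, IsIsoMatrix G H M ∧ M.PosSemidef := by
  let s := (G.adjMatrix ℝ).finite_real_spectrum.toFinset ∪
    (H.adjMatrix ℝ).finite_real_spectrum.toFinset
  have hs : IsCospectralOn s (G.adjMatrix ℝ) (H.adjMatrix ℝ) :=
    ⟨G.isHermitian_adjMatrix ℝ, H.isHermitian_adjMatrix ℝ, by simp [s], by simp [s], htr⟩
  have hswap (g g' : α) (h h' : β) : spectralChoi s (G.adjMatrix ℝ) (H.adjMatrix ℝ) (g, h) (g', h')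
      = spectralChoi s (H.adjMatrix ℝ) (G.adjMatrix ℝ) (h, g) (h', g') := by
    rw [← hs.symm.submatrix_swap_spectralChoi]; rfl
  refine ⟨spectralChoi s (G.adjMatrix ℝ) (H.adjMatrix ℝ), ⟨fun g g' => ?_, fun h h' => ?_,
    fun g g' h h' hne => ?_⟩, hs.posSemidef_spectralChoi⟩
  · simp only [hswap]
    rw [← choiMap_const_one_apply, ← hqH, hs.symm.choiMap_spectralChoi, hqG, of_apply]
  · rw [← choiMap_const_one_apply, ← hqG, hs.choiMap_spectralChoi, hqH, of_apply]
  · have : (g = g' ∧ h ≠ h' ∨ G.Adj g g' ∧ ¬ H.Adj h h') ∨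
      (h = h' ∧ g ≠ g' ∨ H.Adj h h' ∧ ¬ G.Adj g g') := by unfold relEq at hne; tauto
    obtain hne | hne := this
    · exact hG.spectralChoi_apply_eq_zero hs hne
    · rw [hswap]
      exact hH.spectralChoi_apply_eq_zero hs.symm hne

end OneWalkRegular

section MultiplicativeDomain

theorem trace_hadamard_mul_const_one {m n R : Type*} [Fintype m] [Fintype n]
    [NonAssocSemiring R] (A B : Matrix m n R) :
    ((A ⊙ B) * (of fun _ _ => 1 : Matrix n m R)).trace = (A * Bᵀ).trace := by
  simp only [trace, diag_apply, mul_apply, hadamard_apply, of_apply, mul_one, transpose_apply]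

variable {α β R : Type*} [Fintype α] [Fintype β]

theorem apply_eq_apply_of_choiMap_eq [CommRing R] [LinearOrder R] [IsStrictOrderedRing R]
    {M : Matrix (α × β) (α × β) R} {X : Matrix α α R} {Y : Matrix β β R}
    (hM : ∀ p q, 0 ≤ M p q) (hX : X.IsSymm) (hY : Y.IsSymm)
    (hJ : choiMap M (of fun _ _ => 1) = of fun _ _ => 1)
    (hJ' : choiMap (M.submatrix Prod.swap Prod.swap) (of fun _ _ => 1) = of fun _ _ => 1)
    (hXY : choiMap M X = Y) (hYX : choiMap (M.submatrix Prod.swap Prod.swap) Y = X)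
    {g g' : α} {h h' : β} (hne : M (g, h) (g', h') ≠ 0) : X g g' = Y h h' := by
  set K : Matrix (α × β) (α × β) R :=
    (X ⊙ X) ⊗ₖ (of fun _ _ => 1) + (of fun _ _ => 1) ⊗ₖ (Y ⊙ Y) - X ⊗ₖ Y - X ⊗ₖ Y with hK
  have hK_apply (p q : α × β) : K q p = (X p.1 q.1 - Y p.2 q.2) ^ 2 := by
    have hXs : X q.1 p.1 = X p.1 q.1 := hX.apply _ _
    have hYs : Y q.2 p.2 = Y p.2 q.2 := hY.apply _ _
    simp only [hK, Matrix.sub_apply, Matrix.add_apply, kroneckerMap_apply, hadamard_apply,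
      of_apply, hXs, hYs]
    ring
  have htr : (M * K).trace = 0 := by
    have hX2 : (M * ((X ⊙ X) ⊗ₖ of fun _ _ => 1)).trace = (X * X).trace := by
      rw [← trace_mul_choiMap_swap, hJ', trace_hadamard_mul_const_one, hX.eq]
    have hY2 : (M * ((of fun _ _ => 1) ⊗ₖ (Y ⊙ Y))).trace = (Y * Y).trace := by
      rw [← trace_choiMap_mul, hJ, trace_mul_comm, trace_hadamard_mul_const_one, hY.eq]
    have hXY2 : (M * (X ⊗ₖ Y)).trace = (Y * Y).trace := by rw [← trace_choiMap_mul, hXY]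
    have hYX2 : (M * (X ⊗ₖ Y)).trace = (X * X).trace := by rw [← trace_mul_choiMap_swap, hYX]
    simp only [hK, Matrix.mul_add, Matrix.mul_sub, trace_add, trace_sub]
    linarith
  have hterm (p q : α × β) : 0 ≤ M p q * K q p := mul_nonneg (hM p q) (hK_apply p q ▸ sq_nonneg _)
  simp only [trace, diag_apply, mul_apply] at htr
  rw [Finset.sum_eq_zero_iff_of_nonneg fun p _ => Finset.sum_nonneg fun q _ => hterm p q] at htr
  have := (Finset.sum_eq_zero_iff_of_nonneg fun q _ => hterm _ q).1
    (htr (g, h) (Finset.mem_univ _)) (g', h') (Finset.mem_univ _)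
  rw [hK_apply, mul_eq_zero, pow_eq_zero_iff two_ne_zero, sub_eq_zero] at this
  exact this.resolve_left hne

open scoped ComplexOrder in
theorem mul_eq_zero_of_trace_conjTranspose_mul_mul_eq_zero {m n 𝕜 : Type*} [Fintype m] [Fintype n]
    [RCLike 𝕜] {P : Matrix m m 𝕜} (hP : P.PosSemidef) {T : Matrix m n 𝕜}
    (h : (Tᴴ * P * T).trace = 0) : P * T = 0 := by
  have hzero : Tᴴ * P * T = 0 := (hP.conjTranspose_mul_mul_same T).trace_eq_zero_iff.1 h
  refine ext_iff_mulVec.2 fun v => ?_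
  rw [← mulVec_mulVec, zero_mulVec, ← hP.dotProduct_mulVec_zero_iff]
  rw [star_mulVec, ← dotProduct_mulVec, mulVec_mulVec, mulVec_mulVec, hzero,
    zero_mulVec, dotProduct_zero]

variable [DecidableEq α] [DecidableEq β] [CommSemiring R] {M : Matrix (α × β) (α × β) R}
  {X : Matrix α α R} {Y : Matrix β β R}

theorem choiMap_mul_of_mul_kronecker_eq (h : M * (X ⊗ₖ 1) = M * (1 ⊗ₖ Y)) (Z : Matrix α α R) :
    choiMap M (X * Z) = choiMap M Z * Y := by
  refine ext_iff_trace_mul_right.2 fun W => ?_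
  calc (choiMap M (X * Z) * W).trace
      = (M * (X ⊗ₖ 1) * (Z ⊗ₖ W)).trace := by
        rw [trace_choiMap_mul, Matrix.mul_assoc, ← mul_kronecker_mul, Matrix.one_mul]
    _ = (M * (Z ⊗ₖ (Y * W))).trace := by
        rw [h, Matrix.mul_assoc, ← mul_kronecker_mul, Matrix.one_mul]
    _ = (choiMap M Z * Y * W).trace := by rw [← trace_choiMap_mul, Matrix.mul_assoc]

theorem choiMap_pow_of_mul_kronecker_eq (hM₁ : choiMap M 1 = 1)
    (h : M * (X ⊗ₖ 1) = M * (1 ⊗ₖ Y)) (n : ℕ) : choiMap M (X ^ n) = Y ^ n := by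
  induction n with
  | zero => rw [pow_zero, pow_zero, hM₁]
  | succ n ih => rw [pow_succ', pow_succ, choiMap_mul_of_mul_kronecker_eq h, ih]

-- The trace of `Tᴴ M T` vanishes for `T = X ⊗ 1 - 1 ⊗ Y`, and `M` is positive semidefinite.
open scoped ComplexOrder in
theorem mul_kronecker_one_eq_mul_one_kronecker {𝕜 : Type*} [RCLike 𝕜]
    {M : Matrix (α × β) (α × β) 𝕜} {X : Matrix α α 𝕜} {Y : Matrix β β 𝕜}
    (hM : M.PosSemidef) (hX : X.IsHermitian) (hY : Y.IsHermitian) (hM₁ : choiMap M 1 = 1)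
    (hM₁' : choiMap (M.submatrix Prod.swap Prod.swap) 1 = 1) (hXY : choiMap M X = Y)
    (hYX : choiMap (M.submatrix Prod.swap Prod.swap) Y = X) :
    M * (X ⊗ₖ 1) = M * (1 ⊗ₖ Y) := by
  set T : Matrix (α × β) (α × β) 𝕜 := X ⊗ₖ 1 - 1 ⊗ₖ Y with hT
  have hTH : Tᴴ = T := by
    simp only [hT, conjTranspose_sub, conjTranspose_kronecker, conjTranspose_one, hX.eq, hY.eq]
  have hTT : T * T = (X * X) ⊗ₖ 1 + 1 ⊗ₖ (Y * Y) - X ⊗ₖ Y - X ⊗ₖ Y := by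
    simp only [hT, Matrix.sub_mul, Matrix.mul_sub, ← mul_kronecker_mul, Matrix.one_mul,
      Matrix.mul_one]
    abel
  have hX2 : (M * ((X * X) ⊗ₖ 1)).trace = (X * X).trace := by
    rw [← trace_mul_choiMap_swap, hM₁', Matrix.mul_one]
  have hY2 : (M * (1 ⊗ₖ (Y * Y))).trace = (Y * Y).trace := by
    rw [← trace_choiMap_mul, hM₁, Matrix.one_mul]
  have hXY2 : (M * (X ⊗ₖ Y)).trace = (Y * Y).trace := by rw [← trace_choiMap_mul, hXY]
  have hYX2 : (M * (X ⊗ₖ Y)).trace = (X * X).trace := by rw [← trace_mul_choiMap_swap, hYX]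
  have htr : (Tᴴ * M * T).trace = 0 := by
    rw [trace_mul_cycle, hTH, trace_mul_comm, hTT]
    simp only [Matrix.mul_add, Matrix.mul_sub, trace_add, trace_sub]
    linear_combination hX2 + hY2 - hXY2 - hYX2
  have := mul_eq_zero_of_trace_conjTranspose_mul_mul_eq_zero hM htr
  rwa [hT, Matrix.mul_sub, sub_eq_zero] at this

end MultiplicativeDomain

section IsIsoMatrix

variable {α β : Type*} [Fintype α] [Fintype β] {G : SimpleGraph α} {H : SimpleGraph β}
  {M : Matrix (α × β) (α × β) ℝ}

theorem IsIsoMatrix.swap (hM : IsIsoMatrix G H M) :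
    IsIsoMatrix H G (M.submatrix Prod.swap Prod.swap) :=
  ⟨hM.2.1, hM.1, fun h h' g g' hne => hM.2.2 g g' h h' fun hrel =>
    hne ⟨hrel.1.symm, hrel.2.symm⟩⟩

theorem IsIsoMatrix.choiMap_eq (hM : IsIsoMatrix G H M) {X : Matrix α α ℝ} {Y : Matrix β β ℝ}
    (hXY : ∀ g g' h h', relEq G H g g' h h' → X g' g = Y h h') : choiMap M X = Y := by
  ext h h'
  calc choiMap M X h h' = ∑ g, ∑ g', M (g, h) (g', h') * Y h h' := by
        refine Finset.sum_congr rfl fun g _ => Finset.sum_congr rfl fun g' _ => ?_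
        by_cases hrel : relEq G H g g' h h'
        · rw [hXY g g' h h' hrel]
        · rw [hM.2.2 g g' h h' hrel, zero_mul, zero_mul]
    _ = Y h h' := by simp only [← Finset.sum_mul, hM.2.1 h h', one_mul]

theorem IsIsoMatrix.choiMap_const_one (hM : IsIsoMatrix G H M) :
    choiMap M (of fun _ _ => 1) = of fun _ _ => 1 :=
  hM.choiMap_eq fun _ _ _ _ _ => rfl

theorem IsIsoMatrix.choiMap_one [DecidableEq α] [DecidableEq β] (hM : IsIsoMatrix G H M) :
    choiMap M 1 = 1 :=
  hM.choiMap_eq fun g g' h h' hrel => by simp only [one_apply, eq_comm (a := g'), hrel.1]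

variable [DecidableRel G.Adj] [DecidableRel H.Adj]

theorem IsIsoMatrix.choiMap_adjMatrix (hM : IsIsoMatrix G H M) :
    choiMap M (G.adjMatrix ℝ) = H.adjMatrix ℝ :=
  hM.choiMap_eq fun g g' h h' hrel => by
    simp only [SimpleGraph.adjMatrix_apply, G.adj_comm g', hrel.2]

variable [DecidableEq α] [DecidableEq β]

theorem IsIsoMatrix.choiMap_adjMatrix_pow (hM : IsIsoMatrix G H M) (hpsd : M.PosSemidef) (n : ℕ) :
    choiMap M (G.adjMatrix ℝ ^ n) = H.adjMatrix ℝ ^ n :=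
  choiMap_pow_of_mul_kronecker_eq hM.choiMap_one
    (mul_kronecker_one_eq_mul_one_kronecker hpsd (G.isHermitian_adjMatrix ℝ)
      (H.isHermitian_adjMatrix ℝ) hM.choiMap_one hM.swap.choiMap_one hM.choiMap_adjMatrix
      hM.swap.choiMap_adjMatrix) n

theorem IsIsoMatrix.adjMatrix_pow_apply_eq (hM : IsIsoMatrix G H M) (hpsd : M.PosSemidef)
    (hnonneg : ∀ p q, 0 ≤ M p q) {g g' : α} {h h' : β} (hne : M (g, h) (g', h') ≠ 0) (n : ℕ) :
    (G.adjMatrix ℝ ^ n) g g' = (H.adjMatrix ℝ ^ n) h h' :=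
  apply_eq_apply_of_choiMap_eq hnonneg ((G.isSymm_adjMatrix).pow n)
    ((H.isSymm_adjMatrix).pow n) hM.choiMap_const_one hM.swap.choiMap_const_one
    (hM.choiMap_adjMatrix_pow hpsd n) (hM.swap.choiMap_adjMatrix_pow (hpsd.submatrix _) n) hne

theorem IsIsoMatrix.exists_adjMatrix_pow_apply_eq (hM : IsIsoMatrix G H M) (hpsd : M.PosSemidef)
    (hnonneg : ∀ p q, 0 ≤ M p q) (R : Type*) [Semiring R] (n : ℕ) (h h' : β) :
    ∃ g g', (G.adjMatrix R ^ n) g g' = (H.adjMatrix R ^ n) h h' := by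
  obtain ⟨g, -, hg⟩ := Finset.exists_ne_zero_of_sum_ne_zero ((hM.2.1 h h').trans_ne one_ne_zero)
  obtain ⟨g', -, hne⟩ := Finset.exists_ne_zero_of_sum_ne_zero hg
  have hwalk := hM.adjMatrix_pow_apply_eq hpsd hnonneg hne n
  simp only [SimpleGraph.adjMatrix_pow_apply_eq_card_walk, Nat.cast_inj] at hwalk
  exact ⟨g, g', by simp only [SimpleGraph.adjMatrix_pow_apply_eq_card_walk, hwalk]⟩

end IsIsoMatrix

section HoffmanPolynomial

theorem aeval_mul_of_mul_eq_smul {R S : Type*} [CommRing R] [Ring S] [Algebra R S] {a j : S}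
    {k : R} (h : a * j = k • j) (p : R[X]) : aeval a p * j = p.eval k • j := by
  induction p using Polynomial.induction_on' with
  | add p q hp hq => rw [map_add, add_mul, hp, hq, eval_add, add_smul]
  | monomial n c =>
    have hpow : a ^ n * j = k ^ n • j := by
      induction n with
      | zero => rw [pow_zero, pow_zero, one_mul, one_smul]
      | succ n ih => rw [pow_succ, mul_assoc, h, mul_smul_comm, ih, smul_smul, pow_succ']
    rw [aeval_monomial, eval_monomial, mul_assoc, hpow, ← Algebra.smul_def, smul_smul]

theorem aeval_eq_modByMonic_add {R S : Type*} [CommRing R] [Ring S] [Algebra R S] {a : S} {k : R}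
    {q : R[X]} (ha : a * aeval a q = k • aeval a q) (p : R[X]) :
    aeval a p = aeval a (p %ₘ q) + (p /ₘ q).eval k • aeval a q := by
  conv_lhs => rw [← modByMonic_add_div p q, mul_comm, map_add, map_mul]
  rw [aeval_mul_of_mul_eq_smul ha]

/- The matrices `aeval a q` below are multiples of the all-ones matrix when `q` is the Hoffman
polynomial of a regular graph. Modulo `q` only powers below its degree remain. -/
theorem map_aeval_eq_map_aeval {R S T V : Type*} [CommRing R] [Ring S] [Algebra R S] [Ring T]
    [Algebra R T] [AddCommGroup V] [Module R V] {a : S} {b : T} {k : R} {q : R[X]}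
    (hq : q.Monic) (ha : a * aeval a q = k • aeval a q) (hb : b * aeval b q = k • aeval b q)
    (φ : S →ₗ[R] V) (ψ : T →ₗ[R] V) (hφψ : φ (aeval a q) = ψ (aeval b q))
    (hpow : ∀ i < q.natDegree, φ (a ^ i) = ψ (b ^ i)) (p : R[X]) :
    φ (aeval a p) = ψ (aeval b p) := by
  have hlow : φ (aeval a (p %ₘ q)) = ψ (aeval b (p %ₘ q)) := by
    obtain rfl | hq1 := eq_or_ne q 1
    · simp only [modByMonic_one, map_zero]
    have hdeg := natDegree_modByMonic_lt p hq hq1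
    rw [aeval_eq_sum_range' hdeg, aeval_eq_sum_range' hdeg, map_sum, map_sum]
    refine Finset.sum_congr rfl fun i hi => ?_
    rw [map_smul, map_smul, hpow i (Finset.mem_range.1 hi)]
  rw [aeval_eq_modByMonic_add ha, aeval_eq_modByMonic_add hb, map_add, map_add, map_smul,
    map_smul, hφψ, hlow]

variable {α β : Type*} [Fintype α] [DecidableEq α] [Fintype β] [DecidableEq β]
  {G : SimpleGraph α} {H : SimpleGraph β} [DecidableRel G.Adj] [DecidableRel H.Adj]
  {q : ℝ[X]} {c : ℝ} {d : ℕ}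

theorem adjMatrix_mul_const_of_isRegularOfDegree {α R : Type*} [Fintype α] [Semiring R]
    {G : SimpleGraph α} [DecidableRel G.Adj] {d : ℕ} (hG : G.IsRegularOfDegree d) (c : R) :
    G.adjMatrix R * (of fun _ _ => c) = (d : R) • (of fun _ _ => c : Matrix α α R) := by
  ext i j
  simp [SimpleGraph.adjMatrix_mul_apply, hG.degree_eq i]

theorem isOneWalkRegular_of_aeval_eq_const (hq : q.Monic)
    (hqG : aeval (G.adjMatrix ℝ) q = of fun _ _ => c) (hG : G.IsRegularOfDegree d)
    (hdiag : ∀ n < q.natDegree, ∀ i j, (G.adjMatrix ℝ ^ n) i i = (G.adjMatrix ℝ ^ n) j j)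
    (hadj : ∀ n < q.natDegree, ∀ i j i' j', G.Adj i j → G.Adj i' j' →
      (G.adjMatrix ℝ ^ n) i j = (G.adjMatrix ℝ ^ n) i' j') : IsOneWalkRegular G := by
  have hmul : G.adjMatrix ℝ * aeval (G.adjMatrix ℝ) q = (d : ℝ) • aeval (G.adjMatrix ℝ) q := by
    rw [hqG, adjMatrix_mul_const_of_isRegularOfDegree hG]
  have hconst (i j i' j' : α) : aeval (G.adjMatrix ℝ) q i j = aeval (G.adjMatrix ℝ) q i' j' := by
    rw [hqG, of_apply, of_apply]
  exact ⟨fun p i j => map_aeval_eq_map_aeval hq hmul hmul (entryLinearMap ℝ ℝ i i)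
      (entryLinearMap ℝ ℝ j j) (hconst i i j j) (fun n hn => hdiag n hn i j) p,
    fun p i j i' j' h h' => map_aeval_eq_map_aeval hq hmul hmul (entryLinearMap ℝ ℝ i j)
      (entryLinearMap ℝ ℝ i' j') (hconst i j i' j') (fun n hn => hadj n hn i j i' j' h h') p⟩

theorem trace_aeval_adjMatrix_eq (hq : q.Monic)
    (hqG : aeval (G.adjMatrix ℝ) q = of fun _ _ => c)
    (hqH : aeval (H.adjMatrix ℝ) q = of fun _ _ => c) (hG : G.IsRegularOfDegree d)
    (hH : H.IsRegularOfDegree d) (hcard : Fintype.card α = Fintype.card β)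
    (htr : ∀ n < q.natDegree, (G.adjMatrix ℝ ^ n).trace = (H.adjMatrix ℝ ^ n).trace) (p : ℝ[X]) :
    (aeval (G.adjMatrix ℝ) p).trace = (aeval (H.adjMatrix ℝ) p).trace :=
  map_aeval_eq_map_aeval hq (hqG ▸ adjMatrix_mul_const_of_isRegularOfDegree hG c)
    (hqH ▸ adjMatrix_mul_const_of_isRegularOfDegree hH c) (traceLinearMap α ℝ ℝ)
    (traceLinearMap β ℝ ℝ) (by simp [hqG, hqH, trace, hcard]) htr p

end HoffmanPolynomial

section Tesseract

/-- The 4-dimensional hypercube graph: the vertices are the 4-bit words. -/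
def tesseract : SimpleGraph (Fin 16) where
  Adj i j := i ^^^ j ∈ ({1, 2, 4, 8} : Finset (Fin 16))
  symm := ⟨by decide⟩
  loopless := ⟨by decide⟩

instance : DecidableRel tesseract.Adj := fun _ _ => inferInstanceAs (Decidable (_ ∈ _))

/-- The Hoffman graph, obtained from the tesseract by Godsil-McKay switching with respect to the
neighbourhood of `0`: adjacency is complemented between the words of weight one and the words of
weight two. -/
def hoffmanGraph : SimpleGraph (Fin 16) where
  Adj i j :=
    if i ∈ ({1, 2, 4, 8} : Finset (Fin 16)) ∧ j ∈ ({3, 5, 6, 9, 10, 12} : Finset (Fin 16)) ∨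
        j ∈ ({1, 2, 4, 8} : Finset (Fin 16)) ∧ i ∈ ({3, 5, 6, 9, 10, 12} : Finset (Fin 16)) then
      ¬ tesseract.Adj i j
    else tesseract.Adj i j
  symm := ⟨by decide +kernel⟩
  loopless := ⟨by decide +kernel⟩

instance : DecidableRel hoffmanGraph.Adj := fun _ _ => inferInstanceAs (Decidable (ite _ _ _))

/-- The walk counts which the tesseract and the Hoffman graph share: they determine the number of
closed walks at a vertex, and of walks between adjacent vertices, for every length. -/
structure HasTesseractWalks (G : SimpleGraph (Fin 16)) [DecidableRel G.Adj] : Prop where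
  isRegularOfDegree : G.IsRegularOfDegree 4
  diag_pow : ∀ n : Fin 4, (G.adjMatrix ℕ ^ (n : ℕ)).diag = fun _ => ![1, 0, 4, 0] n
  hadamard_pow : ∀ n : Fin 4, G.adjMatrix ℕ ⊙ (G.adjMatrix ℕ ^ (n : ℕ)) =
    (![0, 1, 0, 10] n : ℕ) • G.adjMatrix ℕ
  pow_four_add : G.adjMatrix ℕ ^ 4 + 4 • G.adjMatrix ℕ ^ 3 =
    4 • G.adjMatrix ℕ ^ 2 + 16 • G.adjMatrix ℕ + of fun _ _ => 24

theorem hasTesseractWalks_tesseract : HasTesseractWalks tesseract := by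
  refine ⟨fun v => ?_, ?_, ?_, ?_⟩
  · revert v; decide +kernel
  all_goals decide +kernel

theorem hasTesseractWalks_hoffmanGraph : HasTesseractWalks hoffmanGraph := by
  refine ⟨fun v => ?_, ?_, ?_, ?_⟩
  · revert v; decide +kernel
  all_goals decide +kernel

theorem adjMatrix_pow_apply_eq_natCast {V R : Type*} [Fintype V] [DecidableEq V]
    (G : SimpleGraph V) [DecidableRel G.Adj] [Semiring R] (n : ℕ) (i j : V) :
    (G.adjMatrix R ^ n) i j = ((G.adjMatrix ℕ ^ n) i j : ℕ) := by
  simp only [SimpleGraph.adjMatrix_pow_apply_eq_card_walk, Nat.cast_id]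

/-- The monic polynomial `X (X - 2) (X + 2) (X + 4)`, whose roots are the eigenvalues of the
tesseract other than the degree `4`. -/
noncomputable def tesseractPolynomial : ℝ[X] := X ^ 4 + 4 * X ^ 3 - 4 * X ^ 2 - 16 * X

theorem monic_tesseractPolynomial : tesseractPolynomial.Monic := by
  unfold tesseractPolynomial; monicity!

theorem natDegree_tesseractPolynomial : tesseractPolynomial.natDegree = 4 := by
  unfold tesseractPolynomial; compute_degree!

namespace HasTesseractWalks

variable {G H : SimpleGraph (Fin 16)} [DecidableRel G.Adj] [DecidableRel H.Adj]

theorem pow_apply_self (hG : HasTesseractWalks G) {n : ℕ} (hn : n < 4) (i : Fin 16) :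
    (G.adjMatrix ℝ ^ n) i i = (![1, 0, 4, 0] ⟨n, hn⟩ : ℕ) := by
  rw [adjMatrix_pow_apply_eq_natCast]
  exact congrArg Nat.cast (congrFun (hG.diag_pow ⟨n, hn⟩) i)

theorem pow_apply_adj (hG : HasTesseractWalks G) {n : ℕ} (hn : n < 4) {i j : Fin 16}
    (hij : G.Adj i j) : (G.adjMatrix ℝ ^ n) i j = (![0, 1, 0, 10] ⟨n, hn⟩ : ℕ) := by
  have := congrFun₂ (hG.hadamard_pow ⟨n, hn⟩) i j
  rw [hadamard_apply, Matrix.smul_apply, SimpleGraph.adjMatrix_apply, if_pos hij, one_mul,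
    smul_eq_mul, mul_one] at this
  rw [adjMatrix_pow_apply_eq_natCast, this]

theorem aeval_tesseractPolynomial (hG : HasTesseractWalks G) :
    aeval (G.adjMatrix ℝ) tesseractPolynomial = of fun _ _ => 24 := by
  ext i j
  have hcount := congrArg (Nat.cast : ℕ → ℝ) (congrFun₂ hG.pow_four_add i j)
  have hA := adjMatrix_pow_apply_eq_natCast (R := ℝ) G 1 i j
  simp only [pow_one] at hA
  simp only [Matrix.add_apply, Matrix.smul_apply, smul_eq_mul, of_apply, Nat.cast_add, Nat.cast_mul,
    Nat.cast_ofNat, ← adjMatrix_pow_apply_eq_natCast, ← hA] at hcount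
  have haeval : aeval (G.adjMatrix ℝ) tesseractPolynomial = G.adjMatrix ℝ ^ 4 +
      (4 : ℝ) • G.adjMatrix ℝ ^ 3 - (4 : ℝ) • G.adjMatrix ℝ ^ 2 - (16 : ℝ) • G.adjMatrix ℝ := by
    simp [tesseractPolynomial, Algebra.smul_def, map_ofNat]
  rw [haeval]
  simp only [Matrix.sub_apply, Matrix.add_apply, Matrix.smul_apply, smul_eq_mul, of_apply]
  linarith

theorem isOneWalkRegular (hG : HasTesseractWalks G) : IsOneWalkRegular G := by
  refine isOneWalkRegular_of_aeval_eq_const monic_tesseractPolynomial hG.aeval_tesseractPolynomial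
    hG.isRegularOfDegree (fun n hn i j => ?_) fun n hn i j i' j' h h' => ?_ <;>
    rw [natDegree_tesseractPolynomial] at hn
  · rw [hG.pow_apply_self hn, hG.pow_apply_self hn]
  · rw [hG.pow_apply_adj hn h, hG.pow_apply_adj hn h']

theorem trace_aeval_eq (hG : HasTesseractWalks G) (hH : HasTesseractWalks H) (p : ℝ[X]) :
    (aeval (G.adjMatrix ℝ) p).trace = (aeval (H.adjMatrix ℝ) p).trace := by
  refine trace_aeval_adjMatrix_eq monic_tesseractPolynomial hG.aeval_tesseractPolynomial
    hH.aeval_tesseractPolynomial hG.isRegularOfDegree hH.isRegularOfDegree rfl (fun n hn => ?_) p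
  rw [natDegree_tesseractPolynomial] at hn
  exact Finset.sum_congr rfl fun i _ => (hG.pow_apply_self hn i).trans (hH.pow_apply_self hn i).symm

theorem exists_isIsoMatrix_posSemidef (hG : HasTesseractWalks G) (hH : HasTesseractWalks H) :
    ∃ M, IsIsoMatrix G H M ∧ M.PosSemidef := by
  have hJ {K : SimpleGraph (Fin 16)} [DecidableRel K.Adj] (hK : HasTesseractWalks K) :
      aeval (K.adjMatrix ℝ) ((24 : ℝ)⁻¹ • tesseractPolynomial) = of fun _ _ => 1 := by
    rw [map_smul, hK.aeval_tesseractPolynomial]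
    ext i j
    simp
  exact hG.isOneWalkRegular.exists_isIsoMatrix_posSemidef hH.isOneWalkRegular
    (hG.trace_aeval_eq hH) (hJ hG) (hJ hH)

end HasTesseractWalks

theorem adjMatrix_zmod_two_sq_tesseract : tesseract.adjMatrix (ZMod 2) ^ 2 = 0 := by
  decide +kernel

theorem adjMatrix_zmod_two_sq_hoffmanGraph_ne_zero :
    (hoffmanGraph.adjMatrix (ZMod 2) ^ 2) 1 7 ≠ 0 := by
  decide +kernel

end Tesseract

/-- There are graphs on 16 vertices which are `S+`-isomorphic but not
`DNN`-isomorphic. -/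
theorem exists_sPlus_iso_not_dnn_iso :
    ∃ G H : SimpleGraph (Fin 16),
      (∃ M, IsIsoMatrix G H M ∧ M.PosSemidef) ∧
      ¬ (∃ M, IsIsoMatrix G H M ∧ M.PosSemidef ∧ ∀ p q, 0 ≤ M p q) := by
  refine ⟨tesseract, hoffmanGraph,
    hasTesseractWalks_tesseract.exists_isIsoMatrix_posSemidef hasTesseractWalks_hoffmanGraph, ?_⟩
  rintro ⟨M, hM, hpsd, hnonneg⟩
  obtain ⟨g, g', hwalks⟩ := hM.exists_adjMatrix_pow_apply_eq hpsd hnonneg (ZMod 2) 2 1 7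
  rw [adjMatrix_zmod_two_sq_tesseract] at hwalks
  exact adjMatrix_zmod_two_sq_hoffmanGraph_ne_zero hwalks.symm
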